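/- Let H₁ and H₂ be finite-dimensional complex Hilbert spaces, H = H₁ ⊗ H₂, d₂ = dim H₂, and let f : (0,∞) → ℝ be twice continuously differentiable. Define G(ρ) = d₂⁻¹ · Tr₁₂ f(d₂ρ) − Tr₁ f(ρ₁) on positive definite operators ρ on H, where ρ₁ = Tr₂ ρ. Then G is twice Fréchet differentiable and its second Fréchet differential satisfies d²G(ρ)(h,h) = d₂ · Tr₁₂( h · Df'(d₂ρ) h ) − Tr₁( h₁ · Df'(ρ₁) h₁ ) for every positive definite ρ on H and every self-adjoint h on H, where h₁ = Tr₂ h. -/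

import Mathlib

open Matrix
open scoped ComplexOrder

attribute [local instance] Matrix.normedAddCommGroup Matrix.normedSpace

/-- The matrix function induced by `f : ℝ → ℝ` via the functional calculus
(defined to be `0` on non-Hermitian matrices). -/
noncomputable def matFun {m : Type*} [Fintype m] [DecidableEq m] (f : ℝ → ℝ)
    (x : Matrix m m ℂ) : Matrix m m ℂ :=
  if hx : x.IsHermitian then
    (hx.eigenvectorUnitary : Matrix m m ℂ) *
      Matrix.diagonal (fun i => (f (hx.eigenvalues i) : ℂ)) *
      star (hx.eigenvectorUnitary : Matrix m m ℂ)
  else 0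

/-- `D` is the (complex-linear extension of the) Fréchet differential at `x` of the matrix
function induced by `f`, the differential being taken within the real subspace of
Hermitian matrices. -/
noncomputable def IsFDerivMatFun {m : Type*} [Fintype m] [DecidableEq m] (f : ℝ → ℝ)
    (x : Matrix m m ℂ) (D : Matrix m m ℂ →L[ℂ] Matrix m m ℂ) : Prop :=
  HasFDerivWithinAt (matFun f) (D.restrictScalars ℝ) {y : Matrix m m ℂ | y.IsHermitian} x

/-- `f : (0,∞) → ℝ` (given together with its derivative `f'`) is a matrix entropy:
it is twice continuously differentiable and for every `n` the map
`(x, h) ↦ Tr (h* ⬝ (Df' x) h)` is jointly convex in pairs `(x, h)` of an `n × n`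
positive definite matrix `x` and an arbitrary `n × n` matrix `h`. -/
noncomputable def IsMatrixEntropy (f f' : ℝ → ℝ) : Prop :=
  ContDiffOn ℝ 2 f (Set.Ioi 0) ∧
  (∀ t ∈ Set.Ioi (0 : ℝ), HasDerivAt f (f' t) t) ∧
  ∀ (n : ℕ)
    (D : Matrix (Fin n) (Fin n) ℂ → (Matrix (Fin n) (Fin n) ℂ →L[ℂ] Matrix (Fin n) (Fin n) ℂ)),
    (∀ x : Matrix (Fin n) (Fin n) ℂ, x.PosDef → IsFDerivMatFun f' x (D x)) →
    ConvexOn ℝ {q : Matrix (Fin n) (Fin n) ℂ × Matrix (Fin n) (Fin n) ℂ | q.1.PosDef}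
      (fun q => (Matrix.trace (q.2ᴴ * (D q.1) q.2)).re)

/-- The partial trace over the second tensor factor. -/
noncomputable def ptrace {ι₁ ι₂ : Type*} [Fintype ι₂]
    (ρ : Matrix (ι₁ × ι₂) (ι₁ × ι₂) ℂ) : Matrix ι₁ ι₁ ℂ :=
  Matrix.of fun i j => ∑ k : ι₂, ρ (i, k) (j, k)

open Topology Filter

section L2
open scoped Matrix.Norms.L2Operator

theorem matFun_eq_cfc {m : Type*} [Fintype m] [DecidableEq m] (g : ℝ → ℝ)
    {x : Matrix m m ℂ} (hx : x.IsHermitian) : matFun g x = cfc g x := by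
  rw [hx.cfc_eq, matFun, dif_pos hx, Matrix.IsHermitian.cfc, Unitary.conjStarAlgAut_apply]
  rfl

theorem tendsto_matFun {m : Type*} [Fintype m] [DecidableEq m] (g : ℝ → ℝ)
    (hg : ContinuousOn g (Set.Ioi 0)) {x : Matrix m m ℂ} (hx : x.PosDef) :
    Tendsto (matFun g) (𝓝[{y : Matrix m m ℂ | y.IsHermitian}] x) (𝓝 (matFun g x)) := by
  have key : Tendsto (cfc g) (𝓝[{y : Matrix m m ℂ | y.IsHermitian}] x) (𝓝 (cfc g x)) := by
    have hs : spectrum ℝ x ⊆ Set.Ioi 0 := by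
      rw [hx.1.spectrum_real_eq_range_eigenvalues]
      rintro _ ⟨i, rfl⟩
      exact hx.eigenvalues_pos i
    have hopen : IsOpen {y : Matrix m m ℂ | Set.Ioi (0:ℝ) ∈ 𝓝ˢ (spectrum ℝ y)} :=
      (upperHemicontinuous_spectrum ℝ (Matrix m m ℂ)).isOpen _
    have h1 : ContinuousOn (fun y : Matrix m m ℂ => cfc g y)
        {y : Matrix m m ℂ | y.IsHermitian ∧ Set.Ioi (0:ℝ) ∈ 𝓝ˢ (spectrum ℝ y)} :=
      ContinuousOn.cfc_of_mem_nhdsSet (s := Set.Ioi 0) g (by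
          simp only [nhdsSet_iUnion, mem_iSup]
          exact fun y hy => hy.2) continuousOn_id (fun y hy => hy.1) hg
    have hxm : Set.Ioi (0:ℝ) ∈ 𝓝ˢ (spectrum ℝ x) := isOpen_Ioi.mem_nhdsSet.2 hs
    have h2 := h1 x ⟨hx.1, hxm⟩
    refine h2.mono_left ?_
    rw [nhdsWithin, nhdsWithin]
    refine le_inf inf_le_left ?_
    rw [le_principal_iff]
    have := hopen.mem_nhds hxm
    exact Filter.mem_of_superset (Filter.inter_mem (mem_inf_of_right (mem_principal_self _)) (mem_inf_of_left this)) (fun y hy => ⟨hy.1, hy.2⟩)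
  rw [matFun_eq_cfc g hx.1]
  refine key.congr' ?_
  filter_upwards [self_mem_nhdsWithin] with y hy
  rw [matFun_eq_cfc g hy]

end L2

section Core
variable {m : Type*} [Fintype m] [DecidableEq m]

theorem matFun_mul (g k : ℝ → ℝ) {x : Matrix m m ℂ} (hx : x.IsHermitian) :
    matFun g x * matFun k x = matFun (fun t => g t * k t) x := by
  simp only [matFun, dif_pos hx]
  have hU : star (hx.eigenvectorUnitary : Matrix m m ℂ) * (hx.eigenvectorUnitary : Matrix m m ℂ) = 1 :=
    Unitary.coe_star_mul_self _
  set U := (hx.eigenvectorUnitary : Matrix m m ℂ)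
  calc _ = U * Matrix.diagonal (fun i => (g (hx.eigenvalues i) : ℂ)) * (star U * U) *
        Matrix.diagonal (fun i => (k (hx.eigenvalues i) : ℂ)) * star U := by
          simp only [Matrix.mul_assoc]
    _ = _ := by
          rw [hU, Matrix.mul_one, Matrix.mul_assoc U, Matrix.diagonal_mul_diagonal]
          simp

theorem matFun_sub (g k : ℝ → ℝ) {x : Matrix m m ℂ} (hx : x.IsHermitian) :
    matFun g x - matFun k x = matFun (fun t => g t - k t) x := by
  simp only [matFun, dif_pos hx]
  rw [← Matrix.sub_mul, ← Matrix.mul_sub, Matrix.diagonal_sub]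
  simp

theorem matFun_const (c : ℝ) {x : Matrix m m ℂ} (hx : x.IsHermitian) :
    matFun (fun _ => c) x = (c : ℂ) • (1 : Matrix m m ℂ) := by
  simp only [matFun, dif_pos hx]
  have hU : (hx.eigenvectorUnitary : Matrix m m ℂ) * star (hx.eigenvectorUnitary : Matrix m m ℂ) = 1 :=
    Unitary.coe_mul_star_self _
  rw [← Matrix.smul_one_eq_diagonal, Matrix.mul_smul, Matrix.smul_mul, Matrix.mul_one, hU]

theorem matFun_id {x : Matrix m m ℂ} (hx : x.IsHermitian) :
    matFun (fun t => t) x = x := by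
  rw [matFun_eq_cfc _ hx]
  exact cfc_id' ℝ x hx

/-- rank one eigenprojection -/
noncomputable def eigProj {x : Matrix m m ℂ} (hx : x.IsHermitian) (i : m) : Matrix m m ℂ :=
  (hx.eigenvectorUnitary : Matrix m m ℂ) * Matrix.diagonal (Pi.single i 1) *
    star (hx.eigenvectorUnitary : Matrix m m ℂ)

theorem eigProj_sum {x : Matrix m m ℂ} (hx : x.IsHermitian) : ∑ i, eigProj hx i = 1 := by
  have hU : (hx.eigenvectorUnitary : Matrix m m ℂ) * star (hx.eigenvectorUnitary : Matrix m m ℂ) = 1 :=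
    Unitary.coe_mul_star_self _
  simp only [eigProj]
  rw [← Finset.sum_mul, ← Finset.mul_sum]
  have : ∑ i : m, Matrix.diagonal (Pi.single i (1:ℂ)) = (1 : Matrix m m ℂ) := by
    ext a b
    rw [Matrix.sum_apply]
    by_cases h : a = b
    · subst h; simp [Pi.single_apply]
    · simp [h]
  rw [this, Matrix.mul_one, hU]

theorem eigProj_mul {x : Matrix m m ℂ} (hx : x.IsHermitian) (i : m) (g : ℝ → ℝ) :
    eigProj hx i * matFun g x = (g (hx.eigenvalues i) : ℂ) • eigProj hx i := by
  simp only [eigProj, matFun, dif_pos hx]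
  have hU : star (hx.eigenvectorUnitary : Matrix m m ℂ) * (hx.eigenvectorUnitary : Matrix m m ℂ) = 1 :=
    Unitary.coe_star_mul_self _
  set U := (hx.eigenvectorUnitary : Matrix m m ℂ)
  calc _ = U * Matrix.diagonal (Pi.single i 1) * (star U * U) *
        Matrix.diagonal (fun i => (g (hx.eigenvalues i) : ℂ)) * star U := by
          simp only [Matrix.mul_assoc]
    _ = _ := by
          rw [hU, Matrix.mul_one, Matrix.mul_assoc U, Matrix.diagonal_mul_diagonal,
            ← Matrix.smul_mul, ← Matrix.mul_smul, ← Matrix.diagonal_smul]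
          congr 3
          ext a
          by_cases h : a = i
          · subst h; simp
          · simp [h]

theorem mul_eigProj {x : Matrix m m ℂ} (hx : x.IsHermitian) (i : m) (g : ℝ → ℝ) :
    matFun g x * eigProj hx i = (g (hx.eigenvalues i) : ℂ) • eigProj hx i := by
  simp only [eigProj, matFun, dif_pos hx]
  have hU : star (hx.eigenvectorUnitary : Matrix m m ℂ) * (hx.eigenvectorUnitary : Matrix m m ℂ) = 1 :=
    Unitary.coe_star_mul_self _
  set U := (hx.eigenvectorUnitary : Matrix m m ℂ)
  calc _ = U * Matrix.diagonal (fun i => (g (hx.eigenvalues i) : ℂ)) * (star U * U) *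
        Matrix.diagonal (Pi.single i 1) * star U := by
          simp only [Matrix.mul_assoc]
    _ = _ := by
          rw [hU, Matrix.mul_one, Matrix.mul_assoc U, Matrix.diagonal_mul_diagonal,
            ← Matrix.smul_mul, ← Matrix.mul_smul, ← Matrix.diagonal_smul]
          congr 3
          ext a
          by_cases h : a = i
          · subst h; simp
          · simp [h]

theorem matFun_dslope (g : ℝ → ℝ) (c : ℝ) {y : Matrix m m ℂ} (hy : y.IsHermitian) :
    (y - (c : ℂ) • 1) * matFun (dslope g c) y = matFun g y - (g c : ℂ) • 1 := by
  have h1 : y - (c : ℂ) • 1 = matFun (fun t => t - c) y := by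
    rw [← matFun_sub _ _ hy, matFun_id hy, matFun_const c hy]
  rw [h1, matFun_mul _ _ hy, ← matFun_const (g c) hy, matFun_sub _ _ hy]
  congr 1
  ext t
  simpa using sub_smul_dslope g c t

theorem matFun_diff (g : ℝ → ℝ) {x y : Matrix m m ℂ} (hx : x.IsHermitian) (hy : y.IsHermitian) :
    matFun g y - matFun g x =
      ∑ i, eigProj hx i * (y - x) * matFun (dslope g (hx.eigenvalues i)) y := by
  rw [← Matrix.one_mul (matFun g y - matFun g x), ← eigProj_sum hx, Finset.sum_mul]
  refine Finset.sum_congr rfl fun i _ => ?_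
  have h2 : eigProj hx i * x = (hx.eigenvalues i : ℂ) • eigProj hx i := by
    have := eigProj_mul hx i (fun t => t)
    rwa [matFun_id hx] at this
  have h3 : eigProj hx i * (y - x) = eigProj hx i * (y - (hx.eigenvalues i : ℂ) • 1) := by
    rw [Matrix.mul_sub, Matrix.mul_sub, h2, Matrix.mul_smul, Matrix.mul_one]
  rw [h3, Matrix.mul_assoc, matFun_dslope g _ hy, Matrix.mul_sub, Matrix.mul_sub, eigProj_mul,
    Matrix.mul_smul, Matrix.mul_one]

set_option linter.unusedSectionVars false in
theorem norm_mul_le_card (A B : Matrix m m ℂ) :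
    ‖A * B‖ ≤ (Fintype.card m : ℝ) * (‖A‖ * ‖B‖) := by
  rw [Matrix.norm_le_iff (by positivity)]
  intro i j
  rw [Matrix.mul_apply]
  refine (norm_sum_le _ _).trans ?_
  have : ∀ k ∈ (Finset.univ : Finset m), ‖A i k * B k j‖ ≤ ‖A‖ * ‖B‖ := fun k _ => by
    rw [norm_mul]
    exact mul_le_mul (Matrix.norm_entry_le_entrywise_sup_norm A)
      (Matrix.norm_entry_le_entrywise_sup_norm B) (norm_nonneg _) (norm_nonneg _)
  simpa using Finset.sum_le_card_nsmul _ _ _ this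

/-- the candidate differential -/
noncomputable def dMat (g : ℝ → ℝ) {x : Matrix m m ℂ} (hx : x.IsHermitian) :
    Matrix m m ℂ →L[ℂ] Matrix m m ℂ :=
  LinearMap.toContinuousLinearMap
    (∑ i, LinearMap.mulLeft ℂ (eigProj hx i) ∘ₗ
      LinearMap.mulRight ℂ (matFun (dslope g (hx.eigenvalues i)) x))

theorem dMat_apply (g : ℝ → ℝ) {x : Matrix m m ℂ} (hx : x.IsHermitian) (h : Matrix m m ℂ) :
    dMat g hx h = ∑ i, eigProj hx i * h * matFun (dslope g (hx.eigenvalues i)) x := by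
  simp [dMat, Matrix.mul_assoc]

theorem isFDeriv_dMat (g : ℝ → ℝ) (hg : DifferentiableOn ℝ g (Set.Ioi 0))
    {x : Matrix m m ℂ} (hx : x.PosDef) : IsFDerivMatFun g x (dMat g hx.1) := by
  have hc : ∀ i, ContinuousOn (dslope g (hx.1.eigenvalues i)) (Set.Ioi 0) := fun i =>
    (continuousOn_dslope (Ioi_mem_nhds (hx.eigenvalues_pos i))).2
      ⟨hg.continuousOn, (hg _ (hx.eigenvalues_pos i)).differentiableAt
        (Ioi_mem_nhds (hx.eigenvalues_pos i))⟩
  unfold IsFDerivMatFun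
  have hEq : (fun y : Matrix m m ℂ => ∑ i, eigProj hx.1 i * (y - x) *
        (matFun (dslope g (hx.1.eigenvalues i)) y - matFun (dslope g (hx.1.eigenvalues i)) x))
      =o[𝓝[{y : Matrix m m ℂ | y.IsHermitian}] x] fun y => y - x := by
    suffices H : ∀ i ∈ (Finset.univ : Finset m), (fun y : Matrix m m ℂ => eigProj hx.1 i * (y - x) *
        (matFun (dslope g (hx.1.eigenvalues i)) y - matFun (dslope g (hx.1.eigenvalues i)) x))
        =o[𝓝[{y : Matrix m m ℂ | y.IsHermitian}] x] fun y => y - x from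
      Asymptotics.IsLittleO.fun_sum H
    intro i _
    have ht := tendsto_matFun _ (hc i) hx
    have ho : (fun y : Matrix m m ℂ => matFun (dslope g (hx.1.eigenvalues i)) y
        - matFun (dslope g (hx.1.eigenvalues i)) x)
        =o[𝓝[{y : Matrix m m ℂ | y.IsHermitian}] x] fun _ => (1 : ℝ) := by
      rw [Asymptotics.isLittleO_one_iff]
      have h0 := ht.sub_const (matFun (dslope g (hx.1.eigenvalues i)) x)
      rw [sub_self] at h0
      exact h0
    have hb : (fun y : Matrix m m ℂ => eigProj hx.1 i * (y - x))
        =O[𝓝[{y : Matrix m m ℂ | y.IsHermitian}] x] fun y => ‖y - x‖ := by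
      refine Asymptotics.IsBigO.of_bound ((Fintype.card m : ℝ) * ‖eigProj hx.1 i‖)
        (Eventually.of_forall fun y => ?_)
      rw [norm_norm, mul_assoc]
      exact norm_mul_le_card _ _
    have hm := hb.norm_left.mul_isLittleO ho.norm_left
    have hm' := hm.congr_right (g₂ := fun y => ‖y - x‖) (fun y => by simp)
    refine Asymptotics.IsLittleO.of_norm_right (Asymptotics.IsBigO.trans_isLittleO ?_ hm')
    refine Asymptotics.IsBigO.of_bound (Fintype.card m : ℝ) (Eventually.of_forall fun y => ?_)
    refine (norm_mul_le_card _ _).trans (le_of_eq ?_)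
    simp
  refine HasFDerivWithinAt.of_isLittleO (hEq.congr' ?_ EventuallyEq.rfl)
  filter_upwards [self_mem_nhdsWithin] with y hy
  have e : matFun g y - matFun g x - dMat g hx.1 (y - x) = ∑ i, eigProj hx.1 i * (y - x) *
        (matFun (dslope g (hx.1.eigenvalues i)) y
          - matFun (dslope g (hx.1.eigenvalues i)) x) := by
    rw [matFun_diff g hx.1 hy, dMat_apply, ← Finset.sum_sub_distrib]
    exact Finset.sum_congr rfl fun i _ => (Matrix.mul_sub _ _ _).symm
  exact e.symm

theorem trace_dMat (g g' : ℝ → ℝ) (hg : ∀ t ∈ Set.Ioi (0 : ℝ), HasDerivAt g (g' t) t)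
    {x : Matrix m m ℂ} (hx : x.PosDef) (h : Matrix m m ℂ) :
    Matrix.trace (dMat g hx.1 h) = Matrix.trace (matFun g' x * h) := by
  have h1 : matFun g' x * h = ∑ i, (g' (hx.1.eigenvalues i) : ℂ) • (eigProj hx.1 i * h) := by
    rw [← Matrix.one_mul h, ← Matrix.mul_assoc, ← eigProj_sum hx.1, Finset.mul_sum, Finset.sum_mul]
    refine Finset.sum_congr rfl fun i _ => ?_
    rw [mul_eigProj, Matrix.smul_mul, eigProj_sum, Matrix.one_mul]
  rw [h1, dMat_apply, Matrix.trace_sum, Matrix.trace_sum]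
  refine Finset.sum_congr rfl fun i _ => ?_
  rw [Matrix.trace_mul_comm, ← Matrix.mul_assoc, mul_eigProj, dslope_same,
    (hg _ (hx.eigenvalues_pos i)).deriv, Matrix.smul_mul]

theorem isFDeriv_unique (g : ℝ → ℝ) {x : Matrix m m ℂ} (hx : x.IsHermitian)
    {D E : Matrix m m ℂ →L[ℂ] Matrix m m ℂ} (hD : IsFDerivMatFun g x D)
    (hE : IsFDerivMatFun g x E) {h : Matrix m m ℂ} (hh : h.IsHermitian) : D h = E h := by
  have hl : HasDerivAt (fun t : ℝ => x + t • h) h 0 := by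
    have := ((hasDerivAt_id (0:ℝ)).smul_const h).const_add x
    rw [one_smul] at this
    exact this
  have hmem : ∀ t : ℝ, x + t • h ∈ {y : Matrix m m ℂ | y.IsHermitian} := fun t =>
    hx.add (by
      show (t • h)ᴴ = t • h
      rw [Matrix.conjTranspose_smul, hh.eq]; simp)
  have key : ∀ {F : Matrix m m ℂ →L[ℂ] Matrix m m ℂ}, IsFDerivMatFun g x F →
      HasDerivAt (fun t : ℝ => matFun g (x + t • h)) (F h) 0 := fun {F} hF => by
    have hF' : HasFDerivWithinAt (matFun g) (F.restrictScalars ℝ)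
      {y : Matrix m m ℂ | y.IsHermitian} ((fun t : ℝ => x + t • h) 0) := by
      simpa [IsFDerivMatFun] using hF
    have := hF'.comp_hasDerivAt (0:ℝ) hl (Eventually.of_forall hmem)
    exact this
  exact (key hD).unique (key hE)

end Core

/-- The trace pairing `A ↦ (h ↦ Re Tr (A h))`. -/
noncomputable def trForm {m : Type*} [Fintype m] [DecidableEq m] :
    Matrix m m ℂ →L[ℝ] (Matrix m m ℂ →L[ℝ] ℝ) :=
  LinearMap.toContinuousLinearMap
    ((LinearMap.toContinuousLinearMap :
        (Matrix m m ℂ →ₗ[ℝ] ℝ) ≃ₗ[ℝ] (Matrix m m ℂ →L[ℝ] ℝ)).toLinearMap ∘ₗ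
      (LinearMap.mk₂ ℝ (fun A h : Matrix m m ℂ => (Matrix.trace (A * h)).re)
        (fun A B h => by simp [Matrix.add_mul])
        (fun c A h => by simp)
        (fun A h k => by simp [Matrix.mul_add])
        (fun c A h => by simp)))

theorem trForm_apply {m : Type*} [Fintype m] [DecidableEq m] (A h : Matrix m m ℂ) :
    trForm A h = (Matrix.trace (A * h)).re := rfl

/-- multiplication by a natural number as a real continuous linear map -/
noncomputable def smulCLM {m : Type*} [Fintype m] (d : ℕ) :
    Matrix m m ℂ →L[ℝ] Matrix m m ℂ :=
  LinearMap.toContinuousLinearMap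
    { toFun := fun σ => (d : ℂ) • σ
      map_add' := fun _ _ => smul_add _ _ _
      map_smul' := fun _ _ => smul_comm _ _ _ }

/-- partial trace as a real continuous linear map -/
noncomputable def ptraceCLM {ι₁ ι₂ : Type*} [Fintype ι₁] [Fintype ι₂] :
    Matrix (ι₁ × ι₂) (ι₁ × ι₂) ℂ →L[ℝ] Matrix ι₁ ι₁ ℂ :=
  LinearMap.toContinuousLinearMap
    { toFun := ptrace
      map_add' := fun a b => by
        ext i j
        simp [ptrace, Finset.sum_add_distrib]
      map_smul' := fun c a => by
        ext i j
        simp [ptrace, Finset.mul_sum] }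

theorem ptrace_posDef {ι₁ ι₂ : Type*} [Fintype ι₁] [Fintype ι₂] [Nonempty ι₂]
    {σ : Matrix (ι₁ × ι₂) (ι₁ × ι₂) ℂ} (hσ : σ.PosDef) : (ptrace σ).PosDef := by
  have h : ptrace σ = ∑ k : ι₂, σ.submatrix (fun i => (i, k)) (fun i => (i, k)) := by
    ext i j
    simp [ptrace, Matrix.sum_apply]
  rw [h]
  exact Matrix.posDef_sum Finset.univ_nonempty fun k _ =>
    hσ.submatrix (fun a b hab => (Prod.ext_iff.1 hab).1)

theorem hasFDeriv_trace {m : Type*} [Fintype m] [DecidableEq m] (f f' : ℝ → ℝ)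
    (hf : DifferentiableOn ℝ f (Set.Ioi 0))
    (hf' : ∀ t ∈ Set.Ioi (0 : ℝ), HasDerivAt f (f' t) t)
    {x : Matrix m m ℂ} (hx : x.PosDef) :
    HasFDerivWithinAt (fun y : Matrix m m ℂ => (Matrix.trace (matFun f y)).re)
      (trForm (matFun f' x)) {y : Matrix m m ℂ | y.IsHermitian} x := by
  have h1 := isFDeriv_dMat f hf hx
  have h2 := (trForm (1 : Matrix m m ℂ)).hasFDerivAt.comp_hasFDerivWithinAt x h1
  have e1 : (trForm (1 : Matrix m m ℂ)) ∘ matFun f = fun y => (Matrix.trace (matFun f y)).re := by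
    ext y
    simp [trForm_apply]
  have e2 : (trForm (1 : Matrix m m ℂ)).comp ((dMat f hx.1).restrictScalars ℝ)
      = trForm (matFun f' x) := by
    ext h
    have := trace_dMat f f' hf' hx h
    show trForm (1 : Matrix m m ℂ) (dMat f hx.1 h) = _
    rw [trForm_apply, trForm_apply, Matrix.one_mul, this]
  rw [e1] at h2
  exact h2.congr_fderiv e2

/-- The pairing `A ↦ (h ↦ Re Tr (A (L h)))`. -/
noncomputable def trFormL {m n : Type*} [Fintype m] [DecidableEq m] [Fintype n]
    (L : Matrix n n ℂ →L[ℝ] Matrix m m ℂ) :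
    Matrix m m ℂ →L[ℝ] (Matrix n n ℂ →L[ℝ] ℝ) :=
  LinearMap.toContinuousLinearMap
    ((LinearMap.toContinuousLinearMap :
        (Matrix n n ℂ →ₗ[ℝ] ℝ) ≃ₗ[ℝ] (Matrix n n ℂ →L[ℝ] ℝ)).toLinearMap ∘ₗ
      (LinearMap.mk₂ ℝ (fun (A : Matrix m m ℂ) (h : Matrix n n ℂ) => trForm A (L h))
        (fun A B h => by simp)
        (fun c A h => by simp)
        (fun A h k => by simp)
        (fun c A h => by simp)))

theorem hasFDeriv_gen {E F₁ F₂ : Type*} [NormedAddCommGroup E] [NormedSpace ℝ E]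
    [NormedAddCommGroup F₁] [NormedSpace ℝ F₁] [NormedAddCommGroup F₂] [NormedSpace ℝ F₂]
    {s : Set E} {x : E} (c : ℝ)
    (L₁ : F₁ →L[ℝ] (E →L[ℝ] ℝ)) (L₂ : F₂ →L[ℝ] (E →L[ℝ] ℝ))
    {φ₁ : E → F₁} {φ₁' : E →L[ℝ] F₁} (h₁ : HasFDerivWithinAt φ₁ φ₁' s x)
    {φ₂ : E → F₂} {φ₂' : E →L[ℝ] F₂} (h₂ : HasFDerivWithinAt φ₂ φ₂' s x) :
    HasFDerivWithinAt (fun y => c • L₁ (φ₁ y) - L₂ (φ₂ y))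
      (c • L₁.comp φ₁' - L₂.comp φ₂') s x :=
  ((L₁.hasFDerivAt.comp_hasFDerivWithinAt x h₁).const_smul c).sub
    (L₂.hasFDerivAt.comp_hasFDerivWithinAt x h₂)

/-- For twice continuously differentiable `f : (0,∞) → ℝ`, the function
`G(ρ) = d₂⁻¹ · Tr₁₂ f(d₂ρ) − Tr₁ f(ρ₁)` is twice Fréchet differentiable on positive definite
operators on `H = H₁ ⊗ H₂`, and its second Fréchet differential satisfies
`d²G(ρ)(h,h) = d₂ · Tr₁₂ (h ⬝ Df'(d₂ρ) h) − Tr₁ (h₁ ⬝ Df'(ρ₁) h₁)`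
for positive definite `ρ` and self-adjoint `h`, where `ρ₁ = Tr₂ ρ`, `h₁ = Tr₂ h` and
`d₂ = dim H₂`. -/
theorem second_fderiv_of_G
    {ι₁ ι₂ : Type*} [Fintype ι₁] [DecidableEq ι₁] [Fintype ι₂] [DecidableEq ι₂]
    (f f' : ℝ → ℝ)
    (hf : ContDiffOn ℝ 2 f (Set.Ioi 0))
    (hf' : ∀ t ∈ Set.Ioi (0 : ℝ), HasDerivAt f (f' t) t)
    (d₂ : ℕ) (hd₂ : d₂ = Fintype.card ι₂)
    (G : Matrix (ι₁ × ι₂) (ι₁ × ι₂) ℂ → ℝ)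
    (hG : ∀ ρ, G ρ = (d₂ : ℝ)⁻¹ * (Matrix.trace (matFun f ((d₂ : ℂ) • ρ))).re
        - (Matrix.trace (matFun f (ptrace ρ))).re) :
    ∃ G' : Matrix (ι₁ × ι₂) (ι₁ × ι₂) ℂ → (Matrix (ι₁ × ι₂) (ι₁ × ι₂) ℂ →L[ℝ] ℝ),
      (∀ σ : Matrix (ι₁ × ι₂) (ι₁ × ι₂) ℂ, σ.PosDef →
        HasFDerivWithinAt G (G' σ) {τ : Matrix (ι₁ × ι₂) (ι₁ × ι₂) ℂ | τ.PosDef} σ) ∧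
      ∀ ρ : Matrix (ι₁ × ι₂) (ι₁ × ι₂) ℂ, ρ.PosDef →
        ∃ G'' : Matrix (ι₁ × ι₂) (ι₁ × ι₂) ℂ →L[ℝ]
            (Matrix (ι₁ × ι₂) (ι₁ × ι₂) ℂ →L[ℝ] ℝ),
          HasFDerivWithinAt G' G'' {τ : Matrix (ι₁ × ι₂) (ι₁ × ι₂) ℂ | τ.PosDef} ρ ∧
          ∀ h : Matrix (ι₁ × ι₂) (ι₁ × ι₂) ℂ, h.IsHermitian →
            ∀ (D : Matrix (ι₁ × ι₂) (ι₁ × ι₂) ℂ →L[ℂ] Matrix (ι₁ × ι₂) (ι₁ × ι₂) ℂ)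
              (D₁ : Matrix ι₁ ι₁ ℂ →L[ℂ] Matrix ι₁ ι₁ ℂ),
              IsFDerivMatFun f' ((d₂ : ℂ) • ρ) D → IsFDerivMatFun f' (ptrace ρ) D₁ →
              G'' h h = (d₂ : ℝ) * (Matrix.trace (h * D h)).re
                - (Matrix.trace (ptrace h * D₁ (ptrace h))).re := by
  rcases isEmpty_or_nonempty ι₂ with hE | hE
  · refine ⟨fun _ => 0, fun σ _ => hasFDerivWithinAt_of_subsingleton _ _ _, fun ρ _ => ⟨0, hasFDerivWithinAt_const _ _ _, ?_⟩⟩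
    intro h _ D D₁ _ _
    have h0 : ptrace h = 0 := by
      ext i j
      simp [ptrace]
    have hd : d₂ = 0 := by rw [hd₂]; exact Fintype.card_eq_zero
    simp [h0, hd]
  have hdpos : 0 < d₂ := by rw [hd₂]; exact Fintype.card_pos
  have hd0 : (d₂ : ℝ) ≠ 0 := by positivity
  have hff : DifferentiableOn ℝ f (Set.Ioi 0) := hf.differentiableOn (by norm_num)
  have hf'd : DifferentiableOn ℝ f' (Set.Ioi 0) := by
    have h1 : ContDiffOn ℝ 1 (deriv f) (Set.Ioi 0) := hf.deriv_of_isOpen isOpen_Ioi (by norm_num)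
    exact (h1.differentiableOn (by norm_num)).congr fun t ht => (hf' t ht).deriv.symm
  let L1 : Matrix (ι₁ × ι₂) (ι₁ × ι₂) ℂ →L[ℝ] Matrix (ι₁ × ι₂) (ι₁ × ι₂) ℂ := smulCLM d₂
  let L2 : Matrix (ι₁ × ι₂) (ι₁ × ι₂) ℂ →L[ℝ] Matrix ι₁ ι₁ ℂ := ptraceCLM
  have hL1 : ∀ σ, L1 σ = (d₂ : ℂ) • σ := fun σ => rfl
  have hL2 : ∀ σ, L2 σ = ptrace σ := fun σ => rfl
  have hP1 : ∀ σ : Matrix (ι₁ × ι₂) (ι₁ × ι₂) ℂ, σ.PosDef → (L1 σ).PosDef := fun σ hσ => by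
    rw [hL1]
    exact hσ.smul (by exact_mod_cast hdpos)
  have hP2 : ∀ σ : Matrix (ι₁ × ι₂) (ι₁ × ι₂) ℂ, σ.PosDef → (L2 σ).PosDef := fun σ hσ =>
    ptrace_posDef hσ
  refine ⟨fun σ => (d₂ : ℝ)⁻¹ • trFormL L1 (matFun f' (L1 σ))
    - trFormL L2 (matFun f' (L2 σ)), fun σ hσ => ?_, fun ρ hρ => ?_⟩
  · have e1 := (hasFDeriv_trace f f' hff hf' (hP1 σ hσ)).comp σ (L1.hasFDerivWithinAt)
      (fun τ (hτ : τ.PosDef) => (hP1 τ hτ).1)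
    have e2 := (hasFDeriv_trace f f' hff hf' (hP2 σ hσ)).comp σ (L2.hasFDerivWithinAt)
      (fun τ (hτ : τ.PosDef) => (hP2 τ hτ).1)
    have hGe : G = fun ρ => (d₂ : ℝ)⁻¹ • (Matrix.trace (matFun f (L1 ρ))).re
        - (Matrix.trace (matFun f (L2 ρ))).re := funext hG
    rw [hGe]
    exact (e1.const_smul (d₂ : ℝ)⁻¹).sub e2
  · have i1 := isFDeriv_dMat f' hf'd (hP1 ρ hρ)
    have i2 := isFDeriv_dMat f' hf'd (hP2 ρ hρ)
    have e1 := HasFDerivWithinAt.comp ρ i1 (L1.hasFDerivWithinAt)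
      (fun τ (hτ : τ.PosDef) => (hP1 τ hτ).1)
    have e2 := HasFDerivWithinAt.comp ρ i2 (L2.hasFDerivWithinAt)
      (fun τ (hτ : τ.PosDef) => (hP2 τ hτ).1)
    refine ⟨(d₂ : ℝ)⁻¹ • (trFormL L1).comp (((dMat f' (hP1 ρ hρ).1).restrictScalars ℝ).comp L1)
      - (trFormL L2).comp (((dMat f' (hP2 ρ hρ).1).restrictScalars ℝ).comp L2),
      hasFDeriv_gen (E := Matrix (ι₁ × ι₂) (ι₁ × ι₂) ℂ) (F₁ := Matrix (ι₁ × ι₂) (ι₁ × ι₂) ℂ)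
        (F₂ := Matrix ι₁ ι₁ ℂ) (d₂ : ℝ)⁻¹ (trFormL L1) (trFormL L2) e1 e2, ?_⟩
    intro h hh D D₁ hD hD₁
    have u1 : dMat f' (hP1 ρ hρ).1 h = D h := isFDeriv_unique f' (hP1 ρ hρ).1 i1 hD hh
    have hh2 : (ptrace h).IsHermitian := by
      ext i j
      simp only [ptrace, Matrix.conjTranspose_apply, Matrix.of_apply, star_sum]
      exact Finset.sum_congr rfl fun k _ => hh.apply _ _
    have u2 : dMat f' (hP2 ρ hρ).1 (ptrace h) = D₁ (ptrace h) :=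
      isFDeriv_unique f' (hP2 ρ hρ).1 i2 hD₁ hh2
    show (d₂ : ℝ)⁻¹ • trForm (dMat f' (hP1 ρ hρ).1 ((d₂ : ℂ) • h)) ((d₂ : ℂ) • h)
      - trForm (dMat f' (hP2 ρ hρ).1 (ptrace h)) (ptrace h) = _
    rw [map_smul (dMat f' (hP1 ρ hρ).1), u1, u2, trForm_apply, trForm_apply, Matrix.trace_mul_comm (D₁ _),
      Matrix.smul_mul, Matrix.mul_smul, Matrix.trace_smul, Matrix.trace_smul,
      Matrix.trace_mul_comm (D h)]
    congr 1
    have : ((d₂ : ℂ) • (d₂ : ℂ) • (h * D h).trace).re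
      = (d₂ : ℝ) * ((d₂ : ℝ) * (h * D h).trace.re) := by
      rw [smul_eq_mul, smul_eq_mul, ← Complex.ofReal_natCast, Complex.re_ofReal_mul, Complex.re_ofReal_mul]
    rw [this, smul_eq_mul, inv_mul_cancel_left₀ hd0]
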